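/- arXiv:2501.15291 — 2 statements merged into one kernel-verified Lean document; each statement's English description precedes it below -/
import Mathlib

section
/- For every odd n ∈ ℕ, ∫_ℝ cos(x)·e_n(x) dx = 0, and for every l ∈ ℕ, ∫_ℝ cos(x)·e_{2l}(x) dx = ( √π / (2^{2l−1}·(2l)!·e) )^{1/2} · (−1)^l · H_{2l}(1). -/
open MeasureTheory Polynomial

/-- The physicists' Hermite polynomials: `H 0 = 1`, `H (n+1) = 2x·H n − (H n)'`. -/
noncomputable def hermiteH : ℕ → Polynomial ℝ
  | 0 => 1
  | n + 1 => 2 * X * hermiteH n - derivative (hermiteH n)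

/-- The `n`-th Hermite function. -/
noncomputable def hermiteFun (n : ℕ) (x : ℝ) : ℝ :=
  (Real.sqrt (2 ^ n * (n.factorial : ℝ) * Real.sqrt Real.pi))⁻¹
    * (hermiteH n).eval x * Real.exp (-x ^ 2 / 2)

/-!
With respect to the Fourier kernel `exp (-2πixw)`, the creation operator `A = 2πx - d/dx` satisfies
`𝓕 (A f) = -i A (𝓕 f)`, because `𝓕` turns multiplication by `2πx` into `i d/dw` and `d/dx` into
multiplication by `2πiw`. After the rescaling `x ↦ √(2π) x`, the recursion
`H (n+1) = 2x H n - (H n)'` says that `A` sends each Hermite function to a multiple of the next one,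
and the Gaussian at the bottom of this ladder is fixed by `𝓕`. So the `n`-th Hermite function is an
eigenfunction of `𝓕` with eigenvalue `(-i)ⁿ`, and a cosine integral is the real part of a value of
its Fourier transform.
-/

open Real FourierTransform

section Fourier

variable {V E : Type*} [NormedAddCommGroup V] [InnerProductSpace ℝ V] [FiniteDimensional ℝ V]
  [MeasurableSpace V] [BorelSpace V] [NormedAddCommGroup E] [NormedSpace ℂ E]

lemma fourier_fun_const_smul (c : ℂ) (f : V → E) : 𝓕 (c • f) = c • 𝓕 f :=
  VectorFourier.fourierIntegral_const_smul 𝐞 volume (innerₗ V) f c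

lemma fourier_fun_sub {f g : V → E} (hf : Integrable f) (hg : Integrable g) :
    𝓕 (f - g) = 𝓕 f - 𝓕 g := by
  have hadd : 𝓕 ((f - g) + g) = 𝓕 (f - g) + 𝓕 g :=
    VectorFourier.fourierIntegral_add continuous_fourierChar continuous_inner (hf.sub hg) hg
  rw [← sub_eq_of_eq_add hadd, sub_add_cancel]

lemma re_fourier_ofReal {f : V → ℝ} (hf : Integrable f) (w : V) :
    (𝓕 (fun x ↦ (f x : ℂ)) w).re = ∫ x, cos (2 * π * inner ℝ x w) * f x := by
  have hint : Integrable fun x ↦ 𝐞 (-inner ℝ x w) • (f x : ℂ) :=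
    (fourierIntegral_convergent_iff w).2 hf.ofReal
  rw [fourier_eq, ← RCLike.re_eq_complex_re, ← integral_re hint]
  congr 1 with x
  simp [Circle.smul_def, fourierChar_apply, Complex.exp_re]

end Fourier

/-- The creation operator `2πx - d/dx`, which raises the degree of a Hermite function; the factor
`2π` matches the Fourier kernel `exp (-2πixw)`. -/
noncomputable def creationOperator (f : ℝ → ℂ) (x : ℝ) : ℂ :=
  2 * π * x * f x - deriv f x

lemma creationOperator_const_smul (c : ℂ) (f : ℝ → ℂ) :
    creationOperator (c • f) = c • creationOperator f := by
  ext x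
  simp only [creationOperator, deriv_const_smul_field, Pi.smul_apply, smul_eq_mul]
  ring

lemma fourier_creationOperator {f : ℝ → ℂ} (hf : Integrable f)
    (hxf : Integrable fun x : ℝ ↦ x • f x) (hf_diff : Differentiable ℝ f)
    (hf' : Integrable (deriv f)) :
    𝓕 (creationOperator f) = (-Complex.I) • creationOperator (𝓕 f) := by
  have fourier_position : 𝓕 (fun x : ℝ ↦ 2 * π * x * f x) = Complex.I • deriv (𝓕 f) := by
    rw [deriv_fourier hf hxf, ← fourier_fun_const_smul]
    congr 1 with x
    simp only [Pi.smul_apply, smul_eq_mul]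
    linear_combination (2 * π * x * f x) * Complex.I_sq
  have hxf' : Integrable fun x : ℝ ↦ 2 * π * x * f x := by
    simpa only [Complex.real_smul, mul_assoc] using hxf.const_mul (2 * π : ℂ)
  have fourier_split :
      𝓕 (creationOperator f) = 𝓕 (fun x : ℝ ↦ 2 * π * x * f x) - 𝓕 (deriv f) :=
    fourier_fun_sub hxf' hf'
  rw [fourier_split, fourier_position, fourier_deriv hf hf_diff hf']
  ext w
  simp only [creationOperator, Pi.sub_apply, Pi.smul_apply, smul_eq_mul]
  ring

lemma ofReal_sqrt_two_pi_sq : (√(2 * π) : ℂ) ^ 2 = 2 * π :=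
  mod_cast sq_sqrt two_pi_pos.le

lemma ofReal_sqrt_two_pi_ne_zero : (√(2 * π) : ℂ) ≠ 0 :=
  mod_cast (sqrt_pos.2 two_pi_pos).ne'

lemma integrable_eval_mul_exp_neg_mul_sq (p : ℝ[X]) {b : ℝ} (hb : 0 < b) :
    Integrable fun x : ℝ ↦ p.eval x * Real.exp (-b * x ^ 2) := by
  induction p using Polynomial.induction_on' with
  | add p q hp hq =>
    simp only [eval_add, add_mul]
    exact hp.add hq
  | monomial n a =>
    have hpow : Integrable fun x : ℝ ↦ x ^ (n : ℝ) * Real.exp (-b * x ^ 2) :=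
      integrable_rpow_mul_exp_neg_mul_sq hb (neg_one_lt_zero.trans_le n.cast_nonneg)
    simpa only [eval_monomial, rpow_natCast, mul_assoc] using hpow.const_mul a

/-- The product `p(y) exp (-y²/2)` at `y = √(2π) x`, a scaling for which the Gaussian is its own
Fourier transform; for `p = hermiteH n` it is an unnormalised Hermite function. -/
noncomputable def polyGaussian (p : ℝ[X]) (x : ℝ) : ℂ :=
  p.eval (√(2 * π) * x) * Real.exp (-π * x ^ 2)

lemma integrable_polyGaussian (p : ℝ[X]) : Integrable (polyGaussian p) := by
  have h := (integrable_eval_mul_exp_neg_mul_sq (p.comp (C √(2 * π) * X)) pi_pos).ofReal (𝕜 := ℂ)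
  simpa only [eval_comp, eval_mul, eval_C, eval_X, RCLike.ofReal_mul] using! h

lemma polyGaussian_X_mul (p : ℝ[X]) (x : ℝ) :
    polyGaussian (X * p) x = √(2 * π) * x * polyGaussian p x := by
  simp only [polyGaussian, eval_mul, eval_X, Complex.ofReal_mul]
  ring

lemma hasDerivAt_polyGaussian (p : ℝ[X]) (x : ℝ) :
    HasDerivAt (polyGaussian p) (√(2 * π) * polyGaussian (derivative p - X * p) x) x := by
  have hpoly : HasDerivAt (fun x ↦ p.eval (√(2 * π) * x))
      ((derivative p).eval (√(2 * π) * x) * √(2 * π)) x :=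
    (p.hasDerivAt _).comp x (hasDerivAt_const_mul _)
  have hgauss : HasDerivAt (fun x : ℝ ↦ Real.exp (-π * x ^ 2))
      (Real.exp (-π * x ^ 2) * (-π * (2 * x))) x := by
    simpa using ((hasDerivAt_pow 2 x).const_mul (-π)).exp
  convert! hpoly.ofReal_comp.mul hgauss.ofReal_comp using 1
  simp only [polyGaussian, eval_sub, eval_mul, eval_X]
  push_cast
  linear_combination
    -(x * (p.eval (√(2 * π) * x) : ℝ) * Complex.exp (-π * x ^ 2)) * ofReal_sqrt_two_pi_sq

lemma deriv_polyGaussian (p : ℝ[X]) :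
    deriv (polyGaussian p) = (√(2 * π) : ℂ) • polyGaussian (derivative p - X * p) :=
  funext fun x ↦ (hasDerivAt_polyGaussian p x).deriv

lemma creationOperator_polyGaussian (p : ℝ[X]) :
    creationOperator (polyGaussian p) =
      (√(2 * π) : ℂ) • polyGaussian (2 * X * p - derivative p) := by
  ext x
  simp only [creationOperator, deriv_polyGaussian, Pi.smul_apply, smul_eq_mul, polyGaussian,
    eval_sub, eval_mul, eval_X, eval_ofNat]
  push_cast
  linear_combination
    -(x * (p.eval (√(2 * π) * x) : ℝ) * Complex.exp (-π * x ^ 2)) * ofReal_sqrt_two_pi_sq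

lemma fourier_creationOperator_polyGaussian (p : ℝ[X]) :
    𝓕 (creationOperator (polyGaussian p)) =
      (-Complex.I) • creationOperator (𝓕 (polyGaussian p)) := by
  refine fourier_creationOperator (integrable_polyGaussian p) ?_
    (fun x ↦ (hasDerivAt_polyGaussian p x).differentiableAt) ?_
  · have h := (integrable_polyGaussian (X * p)).const_mul (√(2 * π) : ℂ)⁻¹
    simpa only [polyGaussian_X_mul, mul_assoc, Complex.real_smul,
      inv_mul_cancel_left₀ ofReal_sqrt_two_pi_ne_zero] using h
  · rw [deriv_polyGaussian]
    exact (integrable_polyGaussian _).smul _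

lemma fourier_polyGaussian_one : 𝓕 (polyGaussian 1) = polyGaussian 1 := by
  have h : polyGaussian 1 = fun x : ℝ ↦ Complex.exp (-π * 1 * x ^ 2) := by
    ext x
    simp [polyGaussian]
  rw [h, fourier_gaussian_pi (by simp)]
  simp

lemma fourier_polyGaussian_hermiteH (n : ℕ) :
    𝓕 (polyGaussian (hermiteH n)) = (-Complex.I) ^ n • polyGaussian (hermiteH n) := by
  induction n with
  | zero => simpa [hermiteH] using fourier_polyGaussian_one
  | succ n ih =>
    have hraise : creationOperator (polyGaussian (hermiteH n)) =
        (√(2 * π) : ℂ) • polyGaussian (hermiteH (n + 1)) := creationOperator_polyGaussian _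
    have h := fourier_creationOperator_polyGaussian (hermiteH n)
    rw [ih, creationOperator_const_smul, hraise, fourier_fun_const_smul] at h
    refine smul_right_injective _ ofReal_sqrt_two_pi_ne_zero ?_
    simp only [h, smul_smul]
    ring_nf

lemma ofReal_hermiteFun_sqrt_two_pi_mul (n : ℕ) :
    (fun x ↦ (hermiteFun n (√(2 * π) * x) : ℂ)) =
      ((√(2 ^ n * n.factorial * √π))⁻¹ : ℂ) • polyGaussian (hermiteH n) := by
  ext x
  have hexp : -(√(2 * π) * x) ^ 2 / 2 = -π * x ^ 2 := by
    rw [mul_pow, sq_sqrt two_pi_pos.le]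
    ring
  simp only [hermiteFun, polyGaussian, hexp, Pi.smul_apply, smul_eq_mul]
  push_cast
  ring

lemma fourier_hermiteFun (n : ℕ) :
    𝓕 (fun x ↦ (hermiteFun n (√(2 * π) * x) : ℂ)) =
      (-Complex.I) ^ n • fun x ↦ (hermiteFun n (√(2 * π) * x) : ℂ) := by
  rw [ofReal_hermiteFun_sqrt_two_pi_mul, fourier_fun_const_smul, fourier_polyGaussian_hermiteH,
    smul_comm]

lemma integrable_hermiteFun (n : ℕ) : Integrable (hermiteFun n) := by
  have h := (integrable_eval_mul_exp_neg_mul_sq (hermiteH n) one_half_pos).const_mul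
    (√(2 ^ n * n.factorial * √π))⁻¹
  convert! h using 2 with x
  rw [hermiteFun, mul_assoc, neg_div, neg_mul, one_div_mul_eq_div]

lemma integral_cos_mul_hermiteFun (n : ℕ) (ξ : ℝ) :
    ∫ x, cos (ξ * x) * hermiteFun n x = √(2 * π) * ((-Complex.I) ^ n).re * hermiteFun n ξ := by
  have hpos : 0 < √(2 * π) := sqrt_pos.2 two_pi_pos
  have hint : Integrable fun x ↦ hermiteFun n (√(2 * π) * x) :=
    (integrable_hermiteFun n).comp_mul_left' hpos.ne'
  calc ∫ x, cos (ξ * x) * hermiteFun n x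
      = √(2 * π) * ∫ x, cos (ξ * (√(2 * π) * x)) * hermiteFun n (√(2 * π) * x) := by
        rw [Measure.integral_comp_mul_left (fun x ↦ cos (ξ * x) * hermiteFun n x), smul_eq_mul,
          abs_of_pos (inv_pos.2 hpos), mul_inv_cancel_left₀ hpos.ne']
    _ = √(2 * π) * ∫ x, cos (2 * π * inner ℝ x (ξ / √(2 * π))) *
          hermiteFun n (√(2 * π) * x) := by
        congr! 5 with x
        rw [Real.inner_apply]
        nth_rw 2 [← mul_self_sqrt two_pi_pos.le]
        field_simp
    _ = √(2 * π) * ((-Complex.I) ^ n * hermiteFun n ξ).re := by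
        rw [← re_fourier_ofReal hint, fourier_hermiteFun, Pi.smul_apply, smul_eq_mul,
          mul_div_cancel₀ _ hpos.ne']
    _ = √(2 * π) * ((-Complex.I) ^ n).re * hermiteFun n ξ := by
        rw [Complex.re_mul_ofReal, mul_assoc]

lemma integral_cos_mul_hermiteFun_of_odd {n : ℕ} (hn : Odd n) (ξ : ℝ) :
    ∫ x, cos (ξ * x) * hermiteFun n x = 0 := by
  obtain ⟨k, rfl⟩ := hn
  have hre : ((-Complex.I) ^ (2 * k + 1)).re = 0 := by
    rw [pow_succ, pow_mul, neg_sq, Complex.I_sq]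
    rcases neg_one_pow_eq_or ℂ k with h | h <;> simp [h]
  rw [integral_cos_mul_hermiteFun, hre, mul_zero, zero_mul]

lemma integral_cos_mul_hermiteFun_two_mul (l : ℕ) (ξ : ℝ) :
    ∫ x, cos (ξ * x) * hermiteFun (2 * l) x = √(2 * π) * (-1) ^ l * hermiteFun (2 * l) ξ := by
  have hre : ((-Complex.I) ^ (2 * l)).re = (-1) ^ l := by
    rw [pow_mul, neg_sq, Complex.I_sq]
    exact_mod_cast Complex.ofReal_re ((-1) ^ l)
  rw [integral_cos_mul_hermiteFun, hre]

lemma sqrt_two_pi_mul_hermiteFun (n : ℕ) (ξ : ℝ) :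
    √(2 * π) * hermiteFun n ξ =
      √(√π / ((2 : ℝ) ^ ((n : ℤ) - 1) * n.factorial * Real.exp (ξ ^ 2))) *
        (hermiteH n).eval ξ := by
  have hexp : Real.exp (-ξ ^ 2 / 2) = √(Real.exp (ξ ^ 2))⁻¹ := by
    rw [exp_half, Real.exp_neg]
  have hconst : √(2 * π) * (√(2 ^ n * n.factorial * √π))⁻¹ * √(Real.exp (ξ ^ 2))⁻¹ =
      √(√π / ((2 : ℝ) ^ ((n : ℤ) - 1) * n.factorial * Real.exp (ξ ^ 2))) := by
    rw [← sqrt_inv, ← sqrt_mul two_pi_pos.le, ← sqrt_mul (by positivity),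
      zpow_sub_one₀ two_ne_zero, zpow_natCast]
    congr 1
    nth_rw 1 [← mul_self_sqrt pi_pos.le]
    field_simp
  rw [hermiteFun, hexp, ← hconst]
  ring

theorem cos_hermite_integrals_general (ξ : ℝ) :
    (∀ n : ℕ, Odd n → ∫ x, cos (ξ * x) * hermiteFun n x = 0) ∧
    (∀ l : ℕ, ∫ x, cos (ξ * x) * hermiteFun (2 * l) x
      = √(√π / ((2 : ℝ) ^ (2 * (l : ℤ) - 1) * ((2 * l).factorial : ℝ) * Real.exp (ξ ^ 2)))
        * (-1) ^ l * (hermiteH (2 * l)).eval ξ) := by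
  refine ⟨fun n hn ↦ integral_cos_mul_hermiteFun_of_odd hn ξ, fun l ↦ ?_⟩
  have hconst := sqrt_two_pi_mul_hermiteFun (2 * l) ξ
  rw [Nat.cast_mul, Nat.cast_two] at hconst
  rw [integral_cos_mul_hermiteFun_two_mul, mul_right_comm, hconst, mul_right_comm]

/-- `∫ cos(x) eₙ(x) dx = 0` for odd `n`, and
`∫ cos(x) e_{2l}(x) dx = √(√π / (2^{2l-1} (2l)! e)) · (-1)^l · H_{2l}(1)`. -/
theorem cos_hermite_integrals :
    (∀ n : ℕ, Odd n → ∫ x : ℝ, Real.cos x * hermiteFun n x = 0) ∧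
    (∀ l : ℕ, ∫ x : ℝ, Real.cos x * hermiteFun (2 * l) x
      = Real.sqrt (Real.sqrt Real.pi /
          ((2 : ℝ) ^ (2 * (l : ℤ) - 1) * ((2 * l).factorial : ℝ) * Real.exp 1))
        * (-1) ^ l * (hermiteH (2 * l)).eval 1) := by
  simpa only [one_mul, one_pow] using cos_hermite_integrals_general 1
end

section
/- The series ∑_{n=0}^∞ (e_n′(0))² diverges; in fact ∑_{n=0}^∞ (e_n′(0))² = 2·∑_{n=0}^∞ (2n+1)·(e_{2n}(0))² ≥ 2·∑_{n=0}^∞ (e_{2n}(0))², and the right-hand series diverges. (Hence the e-product ⟨δ′, δ′⟩_e of the distributional derivative of the Dirac delta with itself, computed with respect to the Hermite basis, does not exist.) -/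
open MeasureTheory Polynomial Filter Topology

/-!
The Hermite functions are exchanged by the ladder identities
`e_{n+1}' = √(2(n+1)) e_n - x e_{n+1}` and `e_n' = x e_n - √(2(n+1)) e_{n+1}`. At `x = 0` the first
expresses `(e_{n+1}'(0))²` through `(e_n(0))²`, and comparing the two gives
`(n+1) (e_n(0))² = (n+2) (e_{n+2}(0))²`. Hence `(e_{2n}(0))² = C(2n,n) / (4ⁿ √π)`, which is at least
a constant times `1/n`.
-/

lemma hermiteH_succ (n : ℕ) :
    hermiteH (n + 1) = 2 * X * hermiteH n - derivative (hermiteH n) := rfl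

lemma derivative_hermiteH_succ (n : ℕ) :
    derivative (hermiteH (n + 1)) = C (2 * ((n : ℝ) + 1)) * hermiteH n := by
  induction n with
  | zero => simp [hermiteH, ← C_ofNat]
  | succ n ih =>
    have derivative_two_mul_X : derivative (2 * X : ℝ[X]) = 2 := by
      rw [← C_ofNat, derivative_C_mul, derivative_X, mul_one]
    rw [hermiteH_succ (n + 1), derivative_sub, derivative_mul, derivative_two_mul_X, ih,
      derivative_C_mul, hermiteH_succ n]
    simp only [map_mul, map_add, C_ofNat, map_natCast, map_one, Nat.cast_succ]
    ring

lemma hermiteH_comp_neg_X (n : ℕ) : (hermiteH n).comp (-X) = (-1) ^ n * hermiteH n := by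
  induction n with
  | zero => simp [hermiteH]
  | succ n ih =>
    have derivative_comp_neg_X :
        (derivative (hermiteH n)).comp (-X) = -((-1) ^ n * derivative (hermiteH n)) :=
      calc (derivative (hermiteH n)).comp (-X)
          = -derivative ((hermiteH n).comp (-X)) := by simp [derivative_comp]
        _ = -derivative (C ((-1) ^ n) * hermiteH n) := by rw [ih]; simp
        _ = -((-1) ^ n * derivative (hermiteH n)) := by rw [derivative_C_mul]; simp
    rw [hermiteH_succ, sub_comp, mul_comp, mul_comp, X_comp, ih, derivative_comp_neg_X]
    simp only [ofNat_comp]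
    ring

/-- The `L²` norm of `H_n(x) e^{-x²/2}`, by which the Hermite functions are normalised. -/
noncomputable def hermiteNorm (n : ℕ) : ℝ :=
  √(2 ^ n * (n.factorial : ℝ) * √Real.pi)

lemma hermiteNorm_succ (n : ℕ) :
    hermiteNorm (n + 1) = √(2 * ((n : ℝ) + 1)) * hermiteNorm n := by
  rw [hermiteNorm, hermiteNorm, ← Real.sqrt_mul (by positivity), Nat.factorial_succ]
  congr 1
  push_cast
  ring

lemma inv_hermiteNorm (n : ℕ) :
    (hermiteNorm n)⁻¹ = √(2 * ((n : ℝ) + 1)) * (hermiteNorm (n + 1))⁻¹ := by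
  have sqrt_ne_zero : √(2 * ((n : ℝ) + 1)) ≠ 0 := by positivity
  rw [hermiteNorm_succ, mul_inv, mul_inv_cancel_left₀ sqrt_ne_zero]

lemma hermiteFun_eq (n : ℕ) (x : ℝ) :
    hermiteFun n x = (hermiteNorm n)⁻¹ * (hermiteH n).eval x * Real.exp (-x ^ 2 / 2) := rfl

lemma hermiteFun_neg (n : ℕ) (x : ℝ) : hermiteFun n (-x) = (-1) ^ n * hermiteFun n x := by
  have eval_neg : (hermiteH n).eval (-x) = (-1) ^ n * (hermiteH n).eval x := by
    simpa [eval_comp] using congrArg (eval x) (hermiteH_comp_neg_X n)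
  rw [hermiteFun_eq, hermiteFun_eq, eval_neg, neg_sq]
  ring

lemma hermiteFun_at_zero_of_odd {n : ℕ} (hn : Odd n) : hermiteFun n 0 = 0 :=
  Function.Odd.map_zero fun x => by rw [hermiteFun_neg, hn.neg_one_pow, neg_one_mul]

lemma hasDerivAt_hermiteFun (n : ℕ) (x : ℝ) :
    HasDerivAt (hermiteFun n)
      ((hermiteNorm n)⁻¹ * (derivative (hermiteH n)).eval x * Real.exp (-x ^ 2 / 2)
        - x * hermiteFun n x) x := by
  have hasDerivAt_exponent : HasDerivAt (fun y : ℝ => -y ^ 2 / 2) (-x) x :=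
    ((hasDerivAt_pow 2 x).neg.div_const 2).congr_deriv (by ring)
  refine ((((hermiteH n).hasDerivAt x).const_mul (hermiteNorm n)⁻¹).mul
    hasDerivAt_exponent.exp).congr_deriv ?_
  rw [hermiteFun_eq]
  ring

lemma hasDerivAt_hermiteFun_succ_lowering (n : ℕ) (x : ℝ) :
    HasDerivAt (hermiteFun (n + 1))
      (√(2 * ((n : ℝ) + 1)) * hermiteFun n x - x * hermiteFun (n + 1) x) x := by
  convert hasDerivAt_hermiteFun (n + 1) x using 2
  have sq_sqrt : √(2 * ((n : ℝ) + 1)) * √(2 * ((n : ℝ) + 1)) = 2 * ((n : ℝ) + 1) :=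
    Real.mul_self_sqrt (by positivity)
  rw [hermiteFun_eq, derivative_hermiteH_succ, eval_C_mul, inv_hermiteNorm n]
  linear_combination
    (hermiteNorm (n + 1))⁻¹ * (hermiteH n).eval x * Real.exp (-x ^ 2 / 2) * sq_sqrt

lemma hasDerivAt_hermiteFun_raising (n : ℕ) (x : ℝ) :
    HasDerivAt (hermiteFun n)
      (x * hermiteFun n x - √(2 * ((n : ℝ) + 1)) * hermiteFun (n + 1) x) x := by
  convert hasDerivAt_hermiteFun n x using 1
  have eval_succ :
      (hermiteH (n + 1)).eval x
        = 2 * x * (hermiteH n).eval x - (derivative (hermiteH n)).eval x := by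
    simp [hermiteH_succ]
  rw [hermiteFun_eq, hermiteFun_eq, eval_succ, inv_hermiteNorm n]
  ring

lemma deriv_hermiteFun_at_zero_of_even {n : ℕ} (hn : Even n) : deriv (hermiteFun n) 0 = 0 := by
  rw [(hasDerivAt_hermiteFun_raising n 0).deriv, hermiteFun_at_zero_of_odd hn.add_one]
  ring

lemma sq_deriv_hermiteFun_succ_at_zero (n : ℕ) :
    deriv (hermiteFun (n + 1)) 0 ^ 2 = 2 * ((n : ℝ) + 1) * hermiteFun n 0 ^ 2 := by
  rw [(hasDerivAt_hermiteFun_succ_lowering n 0).deriv, zero_mul, sub_zero, mul_pow,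
    Real.sq_sqrt (by positivity)]

lemma sq_hermiteFun_add_two_at_zero (n : ℕ) :
    ((n : ℝ) + 2) * hermiteFun (n + 2) 0 ^ 2 = ((n : ℝ) + 1) * hermiteFun n 0 ^ 2 := by
  have raising : deriv (hermiteFun (n + 1)) 0 ^ 2
      = 2 * (((n + 1 : ℕ) : ℝ) + 1) * hermiteFun (n + 2) 0 ^ 2 := by
    rw [(hasDerivAt_hermiteFun_raising (n + 1) 0).deriv, zero_mul, zero_sub, neg_sq, mul_pow,
      Real.sq_sqrt (by positivity)]
  have lowering := sq_deriv_hermiteFun_succ_at_zero n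
  push_cast at raising
  linarith

lemma sq_hermiteFun_zero_at_zero : hermiteFun 0 0 ^ 2 = (√Real.pi)⁻¹ := by
  simp [hermiteFun, hermiteH]

lemma sq_hermiteFun_two_mul_at_zero (n : ℕ) :
    hermiteFun (2 * n) 0 ^ 2 = (√Real.pi)⁻¹ * (n.centralBinom / 4 ^ n) := by
  induction n with
  | zero => simp [sq_hermiteFun_zero_at_zero]
  | succ n ih =>
    have recurrence := sq_hermiteFun_add_two_at_zero (2 * n)
    have centralBinom_succ :
        ((n : ℝ) + 1) * (n + 1).centralBinom = 2 * (2 * n + 1) * n.centralBinom :=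
      mod_cast n.succ_mul_centralBinom_succ
    have succ_ne_zero : (2 * ((n : ℝ) + 1)) ≠ 0 := by positivity
    rw [ih] at recurrence
    push_cast at recurrence
    refine mul_left_cancel₀ succ_ne_zero ?_
    rw [mul_add_one 2 n, pow_succ]
    linear_combination recurrence - (√Real.pi)⁻¹ / (2 * 4 ^ n) * centralBinom_succ

lemma not_summable_centralBinom_div_four_pow :
    ¬ Summable (fun n : ℕ => (n.centralBinom : ℝ) / 4 ^ n) := by
  have harmonic_le (n : ℕ) : 1 / 2 * (n : ℝ)⁻¹ ≤ n.centralBinom / 4 ^ n := by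
    rcases n.eq_zero_or_pos with rfl | hn
    · simp
    · have four_pow_le : (4 : ℝ) ^ n ≤ 2 * n * n.centralBinom :=
        mod_cast Nat.four_pow_le_two_mul_self_mul_centralBinom n hn
      rw [one_div, ← mul_inv, inv_eq_one_div, div_le_div_iff₀ (by positivity) (by positivity)]
      linarith
  intro hsum
  have harmonic_summable := hsum.of_nonneg_of_le (fun n => by positivity) harmonic_le
  exact Real.not_summable_natCast_inv ((summable_mul_left_iff (by norm_num)).1 harmonic_summable)

lemma not_summable_sq_hermiteFun_two_mul_at_zero :
    ¬ Summable (fun n : ℕ => hermiteFun (2 * n) 0 ^ 2) := by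
  simp only [sq_hermiteFun_two_mul_at_zero]
  rw [summable_mul_left_iff (by positivity)]
  exact not_summable_centralBinom_div_four_pow

lemma not_summable_sq_deriv_hermiteFun_at_zero :
    ¬ Summable (fun n : ℕ => deriv (hermiteFun n) 0 ^ 2) := by
  intro hsum
  have odd_summable : Summable (fun n : ℕ => deriv (hermiteFun (2 * n + 1)) 0 ^ 2) :=
    hsum.comp_injective fun m n (h : 2 * m + 1 = 2 * n + 1) => by omega
  refine not_summable_sq_hermiteFun_two_mul_at_zero
    (odd_summable.of_nonneg_of_le (fun n => sq_nonneg _) fun n => ?_)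
  rw [sq_deriv_hermiteFun_succ_at_zero]
  refine le_mul_of_one_le_left (sq_nonneg _) ?_
  linarith [Nat.cast_nonneg (α := ℝ) (2 * n)]

/-- the series `∑ₙ (eₙ'(0))²` diverges to `+∞` (so `⟨δ',δ'⟩_e` does
not exist): even-indexed terms vanish, `(e_{2n+1}'(0))² = 2(2n+1)(e_{2n}(0))²
≥ 2 (e_{2n}(0))²`, and `∑ₙ (e_{2n}(0))²` diverges. -/
theorem eProduct_deltaPrime_deltaPrime_diverges :
    (∀ n : ℕ, deriv (hermiteFun (2 * n)) 0 = 0) ∧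
    (∀ n : ℕ, (deriv (hermiteFun (2 * n + 1)) 0) ^ 2
      = 2 * (2 * (n : ℝ) + 1) * (hermiteFun (2 * n) 0) ^ 2) ∧
    ¬ Summable (fun n : ℕ => (hermiteFun (2 * n) 0) ^ 2) ∧
    Tendsto (fun N => ∑ n ∈ Finset.range N, (deriv (hermiteFun n) 0) ^ 2)
      atTop atTop := by
  refine ⟨fun n => deriv_hermiteFun_at_zero_of_even (even_two_mul n), fun n => ?_,
    not_summable_sq_hermiteFun_two_mul_at_zero, ?_⟩
  · exact_mod_cast sq_deriv_hermiteFun_succ_at_zero (2 * n)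
  · exact (not_summable_iff_tendsto_nat_atTop_of_nonneg fun n => sq_nonneg _).1
      not_summable_sq_deriv_hermiteFun_at_zero
end
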